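/- For every positive integer d and every real c > 0 there is a constant C depending only on c and d such that: for every n and every degree-d polynomial threshold function f : ℝⁿ → {−1,1} in n variables, the Gaussian average sensitivity satisfies gas(f) ≤ C·n^{5/6+c}. -/

import Mathlib

open MeasureTheory ProbabilityTheory
open scoped ENNReal

/-- The standard Gaussian measure on `ℝⁿ`. -/
noncomputable def stdGaussian (n : ℕ) : Measure (Fin n → ℝ) :=
  Measure.pi fun _ => gaussianReal 0 1

/-- The sign function, with value `1` at `0`. -/
noncomputable def psign (r : ℝ) : ℝ := if 0 ≤ r then 1 else -1

/-- The Gaussian average sensitivity `gas(f) = ∑ᵢ Pr(f(X) ≠ f(X⁽ⁱ⁾))`, where `X` is a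
standard Gaussian on `ℝⁿ` and `X⁽ⁱ⁾` is obtained from `X` by replacing its `i`-th coordinate
by an independent standard normal. -/
noncomputable def gaussAvgSensitivity (n : ℕ) (f : (Fin n → ℝ) → ℝ) : ℝ :=
  ∑ i : Fin n,
    (((stdGaussian n).prod (gaussianReal 0 1))
      {xy | f xy.1 ≠ f (Function.update xy.1 i xy.2)}).toReal


/-- Coordinatewise rotation with angle `t * w i` in coordinate `i`. -/
noncomputable def rotW {n : ℕ} (w : Fin n → ℝ) (t : ℝ) (q : (Fin n → ℝ) × (Fin n → ℝ)) :
    (Fin n → ℝ) × (Fin n → ℝ) :=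
  (fun i => Real.cos (t * w i) * q.1 i + Real.sin (t * w i) * q.2 i,
   fun i => -Real.sin (t * w i) * q.1 i + Real.cos (t * w i) * q.2 i)

/-- Product Gaussian. -/
noncomputable def gM (n : ℕ) : Measure (Fin n → ℝ) := Measure.pi fun _ => gaussianReal 0 1

instance (n : ℕ) : IsProbabilityMeasure (gM n) := by unfold gM; infer_instance

lemma rot1 (θ : ℝ) : MeasurePreserving
    (fun q : ℝ × ℝ => (Real.cos θ * q.1 + Real.sin θ * q.2, -Real.sin θ * q.1 + Real.cos θ * q.2))
    ((gaussianReal 0 1).prod (gaussianReal 0 1)) ((gaussianReal 0 1).prod (gaussianReal 0 1)) := by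
  refine ⟨by fun_prop, ?_⟩
  exact IsGaussian.map_rotation_eq_self (μ := gaussianReal 0 1) (by simp) θ

lemma rotW_mp {n : ℕ} (w : Fin n → ℝ) (t : ℝ) :
    MeasurePreserving (rotW w t) ((gM n).prod (gM n)) ((gM n).prod (gM n)) := by
  have h1 := measurePreserving_arrowProdEquivProdArrow ℝ ℝ (Fin n)
    (fun _ => gaussianReal 0 1) (fun _ => gaussianReal 0 1)
  have h2 := measurePreserving_pi
    (fun _ : Fin n => (gaussianReal 0 1).prod (gaussianReal 0 1))
    (fun _ : Fin n => (gaussianReal 0 1).prod (gaussianReal 0 1)) (fun i => rot1 (t * w i))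
  exact (h1.comp h2).comp (h1.symm _)

lemma rotW_meas {n : ℕ} (w : Fin n → ℝ) :
    Measurable (fun r : ((Fin n → ℝ) × (Fin n → ℝ)) × ℝ => rotW w r.2 r.1) := by
  unfold rotW
  fun_prop

lemma rot_avg {n : ℕ} (w : Fin n → ℝ) (Φ : (Fin n → ℝ) × (Fin n → ℝ) → ℝ≥0∞)
    (hΦ : Measurable Φ) :
    ∫⁻ q, (∫⁻ t in Set.Icc 0 (Real.pi / 2), Φ (rotW w t q)) ∂((gM n).prod (gM n)) =
      ENNReal.ofReal (Real.pi / 2) * ∫⁻ q, Φ q ∂((gM n).prod (gM n)) := by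
  rw [lintegral_lintegral_swap]
  · have : ∀ t, ∫⁻ q, Φ (rotW w t q) ∂((gM n).prod (gM n)) = ∫⁻ q, Φ q ∂((gM n).prod (gM n)) :=
      fun t => (rotW_mp w t).lintegral_comp hΦ
    simp only [this, lintegral_const]
    simp [mul_comm]
  · exact (hΦ.comp (rotW_meas w)).aemeasurable

lemma map_lin {n : ℕ} (a : Fin n → ℝ) :
    (gM n).map (fun z => ∑ i, a i * z i) =
      (gaussianReal 0 1).map (fun y => √(∑ i, a i ^ 2) * y) := by
  have hm : Measurable (fun z : Fin n → ℝ => ∑ i, a i * z i) := by fun_prop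
  have : IsProbabilityMeasure ((gM n).map (fun z => ∑ i, a i * z i)) :=
    Measure.isProbabilityMeasure_map hm.aemeasurable
  have : IsProbabilityMeasure ((gaussianReal 0 1).map (fun y => √(∑ i, a i ^ 2) * y)) :=
    Measure.isProbabilityMeasure_map (by fun_prop)
  apply Measure.ext_of_charFun
  ext t
  rw [gaussianReal_map_const_mul, charFun_gaussianReal, charFun_apply_real,
    integral_map hm.aemeasurable (by fun_prop)]
  have h1 : ∀ z : Fin n → ℝ, Complex.exp (t * ((∑ i, a i * z i : ℝ) : ℂ) * Complex.I) =
      ∏ i, Complex.exp (((t * a i : ℝ) : ℂ) * (z i : ℂ) * Complex.I) := by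
    intro z
    rw [← Complex.exp_sum]
    congr 1
    push_cast
    rw [Finset.mul_sum, Finset.sum_mul]
    exact Finset.sum_congr rfl fun i _ => by ring
  simp_rw [h1]
  unfold gM
  rw [integral_fintype_prod_eq_prod (𝕜 := ℂ)
    (f := fun (i : Fin n) (y : ℝ) => Complex.exp (((t * a i : ℝ) : ℂ) * (y : ℂ) * Complex.I))]
  simp_rw [← charFun_apply_real, charFun_gaussianReal]
  rw [← Complex.exp_sum]
  congr 1
  have h2 : (0 : ℝ) ≤ ∑ i, a i ^ 2 := Finset.sum_nonneg fun i _ => sq_nonneg _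
  simp [Real.sq_sqrt h2]
  rw [← Finset.sum_div, Finset.sum_mul]
  congr 1
  exact Finset.sum_congr rfl fun i _ => by ring

lemma lint_lin {n : ℕ} (a : Fin n → ℝ) :
    ∫⁻ z, ‖∑ i, a i * z i‖ₑ ∂(gM n) =
      ENNReal.ofReal (√(∑ i, a i ^ 2)) * ∫⁻ y, ‖y‖ₑ ∂(gaussianReal 0 1) := by
  have h := congrArg (fun μ => ∫⁻ y, ‖y‖ₑ ∂μ) (map_lin a)
  rw [lintegral_map (by fun_prop) (by fun_prop), lintegral_map (by fun_prop) (by fun_prop)] at h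
  rw [h, ← lintegral_const_mul _ (by fun_prop)]
  simp [enorm_mul, Real.enorm_eq_ofReal]

lemma lint_coord {n : ℕ} (b : ℝ) (i : Fin n) :
    ∫⁻ z, ‖b * z i‖ₑ ∂(gM n) = ENNReal.ofReal |b| * ∫⁻ y, ‖y‖ₑ ∂(gaussianReal 0 1) := by
  have h := (measurePreserving_eval (fun _ : Fin n => gaussianReal 0 1) i).lintegral_comp
    (f := fun y : ℝ => ‖b * y‖ₑ) (by fun_prop)
  simp only [Function.eval] at h
  unfold gM
  rw [h, ← lintegral_const_mul _ (by fun_prop)]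
  simp [enorm_mul, Real.enorm_eq_ofReal_abs]

lemma sum_coord_le {n : ℕ} (a : Fin n → ℝ) :
    ∑ i, ∫⁻ z, ‖a i * z i‖ₑ ∂(gM n) ≤
      ENNReal.ofReal √n * ∫⁻ z, ‖∑ i, a i * z i‖ₑ ∂(gM n) := by
  simp_rw [lint_coord]
  rw [lint_lin, ← Finset.sum_mul, ← mul_assoc, ← ENNReal.ofReal_sum_of_nonneg
    (fun i _ => abs_nonneg _), ← ENNReal.ofReal_mul (Real.sqrt_nonneg _)]
  gcongr
  rw [← Real.sqrt_mul (Nat.cast_nonneg n)]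
  apply Real.le_sqrt_of_sq_le
  have := sq_sum_le_card_mul_sum_sq (s := Finset.univ) (f := fun i => |a i|)
  simpa using this

lemma hasDerivAt_eval {n : ℕ} (p : MvPolynomial (Fin n) ℝ) (γ : ℝ → Fin n → ℝ)
    (γ' : Fin n → ℝ) (t : ℝ) (h : ∀ i, HasDerivAt (fun s => γ s i) (γ' i) t) :
    HasDerivAt (fun s => MvPolynomial.eval (γ s) p)
      (∑ i, MvPolynomial.eval (γ t) (MvPolynomial.pderiv i p) * γ' i) t := by
  induction p using MvPolynomial.induction_on with
  | C a => simpa using hasDerivAt_const t a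
  | add p q hp hq =>
    simp only [map_add, add_mul, Finset.sum_add_distrib]
    exact hp.add hq
  | mul_X p j hp =>
    simp only [map_mul, MvPolynomial.eval_X]
    refine (hp.mul (h j)).congr_deriv ?_
    simp only [Derivation.leibniz, smul_eq_mul, map_add, map_mul, MvPolynomial.eval_X, add_mul,
      Finset.sum_add_distrib, MvPolynomial.pderiv_X]
    have key : ∑ x, MvPolynomial.eval (γ t) p *
        MvPolynomial.eval (γ t) ((Pi.single x 1 : Fin n → MvPolynomial (Fin n) ℝ) j) * γ' x =
        MvPolynomial.eval (γ t) p * γ' j := by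
      rw [Finset.sum_eq_single j]
      · simp
      · intro b _ hb
        simp [Pi.single_apply, hb.symm]
      · simp
    rw [key, Finset.sum_mul, add_comm]
    congr 1
    exact Finset.sum_congr rfl fun i _ => by ring

lemma tv_bound (h h' q q' : ℝ → ℝ) (B : ℝ) (hh : ∀ s, HasDerivAt h (h' s) s)
    (hc : Continuous h') (h0 : ∀ s, 0 ≤ h' s) (hB : ∀ s, |h s| ≤ B)
    (hq : ∀ s, HasDerivAt q (q' s) s) (hqc : Continuous q') (S : Finset ℝ) :
    ∀ a b : ℝ, a ≤ b → (∀ t ∈ Set.Ioo a b, q' t = 0 → t ∈ S) →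
      ∫⁻ t in Set.Icc a b, ‖h' (q t) * q' t‖ₑ ≤ ENNReal.ofReal (2 ^ S.card * (2 * B)) := by
  have hB0 : 0 ≤ B := (abs_nonneg _).trans (hB 0)
  have hF : ∀ s, HasDerivAt (fun t => h (q t)) (h' (q s) * q' s) s := fun s => (hh (q s)).comp s (hq s)
  have hqcont : Continuous q := continuous_iff_continuousAt.2 fun s => (hq s).continuousAt
  have hFc : Continuous (fun t => h' (q t) * q' t) := by fun_prop
  induction S using Finset.induction_on with
  | empty =>
    intro a b hab hz
    have key : ∃ ε : ℝ, |ε| = 1 ∧ ∀ t ∈ Set.Ioo a b, |h' (q t) * q' t| = ε * (h' (q t) * q' t) := by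
      by_cases hpos : ∀ t ∈ Set.Ioo a b, 0 ≤ q' t
      · exact ⟨1, by simp, fun t ht => by
          rw [one_mul, abs_of_nonneg (mul_nonneg (h0 _) (hpos t ht))]⟩
      · push Not at hpos
        obtain ⟨t0, ht0, hn⟩ := hpos
        refine ⟨-1, by simp, fun t ht => ?_⟩
        have : q' t ≤ 0 := by
          by_contra! hp
          have := (isPreconnected_Ioo (a := a) (b := b)).intermediate_value ht0 ht
            hqc.continuousOn
          obtain ⟨u, hu, hu0⟩ := this ⟨hn.le, hp.le⟩
          simpa using hz u hu hu0
        rw [abs_of_nonpos (mul_nonpos_of_nonneg_of_nonpos (h0 _) this)]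
        ring
    obtain ⟨ε, hε, hk⟩ := key
    rw [← setLIntegral_congr (Ioo_ae_eq_Icc (a := a) (b := b))]
    have hFint : ∫ t in a..b, h' (q t) * q' t = h (q b) - h (q a) :=
      intervalIntegral.integral_eq_sub_of_hasDerivAt (fun s _ => hF s) (hFc.intervalIntegrable _ _)
    have hint : IntegrableOn (fun t => h' (q t) * q' t) (Set.Ioo a b) :=
      (hFc.continuousOn.integrableOn_Icc (a := a) (b := b)).mono_set Set.Ioo_subset_Icc_self
    have h3 : ∫⁻ t in Set.Ioo a b, ‖h' (q t) * q' t‖ₑ =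
        ENNReal.ofReal (∫ t in Set.Ioo a b, ‖h' (q t) * q' t‖) := by
      rw [ofReal_integral_norm_eq_lintegral_enorm hint]
    rw [h3]
    apply ENNReal.ofReal_le_ofReal
    rw [setIntegral_congr_fun measurableSet_Ioo
      (g := fun t => ε * (h' (q t) * q' t)) (fun t ht => by simpa using hk t ht),
      integral_const_mul, ← integral_Ioc_eq_integral_Ioo, ← intervalIntegral.integral_of_le hab, hFint]
    refine (le_abs_self _).trans ?_
    rw [abs_mul, hε]
    have h1 := hB (q a)
    have h2 := hB (q b)
    rw [abs_le] at h1 h2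
    simp only [one_mul, Finset.card_empty, pow_zero, abs_le]
    constructor <;> linarith
  | insert z S hzS ih =>
    intro a b hab hz
    have hpw : (2:ℝ) ^ (insert z S).card * (2 * B) = 2 ^ S.card * (2 * B) + 2 ^ S.card * (2 * B) := by
      rw [Finset.card_insert_of_notMem hzS]; ring
    rw [hpw, ENNReal.ofReal_add (by positivity) (by positivity)]
    by_cases hzm : z ∈ Set.Ioo a b
    · have e : Set.Icc a b = Set.Icc a z ∪ Set.Icc z b :=
        (Set.Icc_union_Icc_eq_Icc hzm.1.le hzm.2.le).symm
      rw [e]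
      refine (lintegral_union_le _ _ _).trans ?_
      refine add_le_add (ih a z hzm.1.le ?_) (ih z b hzm.2.le ?_)
      · intro t ht h0
        have := hz t ⟨ht.1, ht.2.trans hzm.2⟩ h0
        rcases Finset.mem_insert.1 this with h | h
        · exact absurd h ht.2.ne
        · exact h
      · intro t ht h0
        have := hz t ⟨hzm.1.trans ht.1, ht.2⟩ h0
        rcases Finset.mem_insert.1 this with h | h
        · exact absurd h ht.1.ne'
        · exact h
    · refine (ih a b hab ?_).trans le_self_add
      intro t ht h0
      rcases Finset.mem_insert.1 (hz t ht h0) with h | h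
      · exact absurd (h ▸ ht) hzm
      · exact h

/-- `φ` is (a shift of) a trigonometric polynomial of degree at most `d`. -/
def TrigDeg (d : ℕ) (φ : ℝ → ℝ) : Prop :=
  ∃ P : Polynomial ℂ, P.natDegree ≤ 2 * d ∧
    ∀ t : ℝ, P.eval (Complex.exp (t * Complex.I)) = Complex.exp (t * Complex.I) ^ d * (φ t : ℂ)

lemma TrigDeg.mono {d e : ℕ} {φ : ℝ → ℝ} (h : TrigDeg d φ) (hde : d ≤ e) : TrigDeg e φ := by
  obtain ⟨P, hP, hE⟩ := h
  refine ⟨Polynomial.X ^ (e - d) * P, ?_, fun t => ?_⟩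
  · refine Polynomial.natDegree_mul_le.trans ?_
    rw [Polynomial.natDegree_X_pow]
    omega
  · rw [Polynomial.eval_mul, Polynomial.eval_pow, Polynomial.eval_X, hE, ← mul_assoc, ← pow_add,
      Nat.sub_add_cancel hde]

lemma TrigDeg.mul {d e : ℕ} {φ ψ : ℝ → ℝ} (h : TrigDeg d φ) (h' : TrigDeg e ψ) :
    TrigDeg (d + e) (fun t => φ t * ψ t) := by
  obtain ⟨P, hP, hE⟩ := h
  obtain ⟨Q, hQ, hE'⟩ := h'
  refine ⟨P * Q, ?_, fun t => ?_⟩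
  · refine Polynomial.natDegree_mul_le.trans ?_
    omega
  · rw [Polynomial.eval_mul, hE, hE']
    push_cast
    ring

lemma TrigDeg.add {d : ℕ} {φ ψ : ℝ → ℝ} (h : TrigDeg d φ) (h' : TrigDeg d ψ) :
    TrigDeg d (fun t => φ t + ψ t) := by
  obtain ⟨P, hP, hE⟩ := h
  obtain ⟨Q, hQ, hE'⟩ := h'
  refine ⟨P + Q, Polynomial.natDegree_add_le_of_degree_le hP hQ, fun t => ?_⟩
  rw [Polynomial.eval_add, hE, hE']
  push_cast
  ring

lemma TrigDeg.const (a : ℝ) : TrigDeg 0 (fun _ => a) :=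
  ⟨Polynomial.C (a : ℂ), by simp, by simp⟩

lemma TrigDeg.pow {d : ℕ} {φ : ℝ → ℝ} (h : TrigDeg d φ) (k : ℕ) :
    TrigDeg (k * d) (fun t => φ t ^ k) := by
  induction k with
  | zero => simpa using TrigDeg.const 1
  | succ k ih =>
    have := ih.mul h
    simpa [pow_succ, Nat.succ_mul] using this

lemma TrigDeg.prod {ι : Type*} (s : Finset ι) (d : ι → ℕ) (φ : ι → ℝ → ℝ)
    (h : ∀ i ∈ s, TrigDeg (d i) (φ i)) : TrigDeg (∑ i ∈ s, d i) (fun t => ∏ i ∈ s, φ i t) := by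
  classical
  induction s using Finset.induction_on with
  | empty => simpa using TrigDeg.const 1
  | insert a s ha ih =>
    simp only [Finset.sum_insert ha, Finset.prod_insert ha]
    exact (h a (by simp)).mul (ih fun i hi => h i (by simp [hi]))

lemma TrigDeg.sum {ι : Type*} (s : Finset ι) (d : ℕ) (φ : ι → ℝ → ℝ)
    (h : ∀ i ∈ s, TrigDeg d (φ i)) : TrigDeg d (fun t => ∑ i ∈ s, φ i t) := by
  classical
  induction s using Finset.induction_on with
  | empty => simpa using (TrigDeg.const 0).mono (Nat.zero_le d)
  | insert a s ha ih =>
    simp only [Finset.sum_insert ha]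
    exact (h a (by simp)).add (ih fun i hi => h i (by simp [hi]))

lemma TrigDeg.lin (x z : ℝ) : TrigDeg 1 (fun t => Real.cos t * x + Real.sin t * z) := by
  refine ⟨Polynomial.C (((x : ℂ) - z * Complex.I) / 2) * Polynomial.X ^ 2 +
    Polynomial.C (((x : ℂ) + z * Complex.I) / 2), ?_, fun t => ?_⟩
  · refine (Polynomial.natDegree_add_C).trans_le ?_
    exact (Polynomial.natDegree_C_mul_X_pow_le _ _)
  · have hcs := Complex.exp_mul_I (t : ℂ)
    have h1 : Complex.cos (t : ℂ) ^ 2 + Complex.sin (t : ℂ) ^ 2 = 1 :=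
      Complex.cos_sq_add_sin_sq _
    have hI : Complex.I ^ 2 = -1 := Complex.I_sq
    simp only [Polynomial.eval_add, Polynomial.eval_mul, Polynomial.eval_C, Polynomial.eval_pow,
      Polynomial.eval_X, hcs]
    push_cast
    generalize Complex.cos (t : ℂ) = c at *
    generalize Complex.sin (t : ℂ) = s at *
    generalize Complex.I = I at *
    linear_combination (-((x : ℂ) + z * I) / 2) * h1 +
      ((x : ℂ) * s ^ 2 / 2 - z * I * s^2 / 2 - z * c * s) * hI

lemma TrigDeg.eval {n d : ℕ} (p : MvPolynomial (Fin n) ℝ) (hp : p.totalDegree ≤ d)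
    (x z : Fin n → ℝ) :
    TrigDeg d (fun t => MvPolynomial.eval (fun i => Real.cos t * x i + Real.sin t * z i) p) := by
  simp only [MvPolynomial.eval_eq]
  refine TrigDeg.sum _ _ _ fun m hm => ?_
  have h1 := (TrigDeg.const (p.coeff m)).mul
    (TrigDeg.prod m.support (fun i => m i * 1) _ fun i _ => (TrigDeg.lin (x i) (z i)).pow (m i))
  refine h1.mono ?_
  have := MvPolynomial.le_totalDegree hm
  simp only [Finsupp.sum] at this
  simp only [mul_one]
  omega

lemma TrigDeg.zeros {d : ℕ} {q q' : ℝ → ℝ} (h : TrigDeg d q) (hq : ∀ t, HasDerivAt q (q' t) t) :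
    (∀ t, q' t = 0) ∨ ∃ S : Finset ℝ, S.card ≤ 2 * d ∧
      ∀ t ∈ Set.Ioo (0 : ℝ) (Real.pi / 2), q' t = 0 → t ∈ S := by
  obtain ⟨P, hP, hE⟩ := h
  set W : Polynomial ℂ := Polynomial.X * Polynomial.derivative P - Polynomial.C (d : ℂ) * P with hW
  have key : ∀ t : ℝ, W.eval (Complex.exp (t * Complex.I)) * Complex.I =
      Complex.exp (t * Complex.I) ^ d * (q' t : ℂ) := by
    intro t
    have he : HasDerivAt (fun s : ℝ => Complex.exp (s * Complex.I))
        (Complex.exp (t * Complex.I) * Complex.I) t := by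
      have h1 : HasDerivAt (fun s : ℝ => (s : ℂ) * Complex.I) (1 * Complex.I) t :=
        (HasDerivAt.ofReal_comp (hasDerivAt_id t)).mul_const Complex.I
      simpa using h1.cexp
    have h2 := (P.hasDerivAt (Complex.exp (t * Complex.I))).comp t he
    have h3 := (he.pow d).mul (hq t).ofReal_comp
    have h4 : (fun s : ℝ => P.eval (Complex.exp (s * Complex.I))) =
      (fun s : ℝ => Complex.exp (s * Complex.I) ^ d * (q s : ℂ)) := funext hE
    have h5 := h2.unique (h3.congr_of_eventuallyEq (Filter.Eventually.of_forall hE))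
    rw [hW]
    simp only [Polynomial.eval_sub, Polynomial.eval_mul, Polynomial.eval_X, Polynomial.eval_C, hE]
    rcases Nat.eq_zero_or_pos d with h0 | h0
    · subst h0
      simp at h5 ⊢
      linear_combination h5
    · have h6 : Complex.exp (t * Complex.I) ^ d =
        Complex.exp (t * Complex.I) ^ (d - 1) * Complex.exp (t * Complex.I) := by
        rw [← pow_succ, Nat.sub_add_cancel h0]
      simp only [Pi.pow_apply] at h5
      rw [h6] at h5 ⊢
      linear_combination h5
  by_cases hW0 : W = 0
  · left
    intro t
    have := key t
    rw [hW0] at this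
    simpa using this
  · right
    refine ⟨W.roots.toFinset.image Complex.arg, ?_, fun t ht h0 => ?_⟩
    · refine Finset.card_image_le.trans ((Multiset.toFinset_card_le _).trans
        ((Polynomial.card_roots' W).trans ?_))
      refine (Polynomial.natDegree_sub_le_of_le (m := 2 * d) (n := 2 * d) ?_ ?_).trans (by simp)
      · rcases Nat.eq_zero_or_pos P.natDegree with h0 | h0
        · rw [Polynomial.eq_C_of_natDegree_eq_zero h0]; simp
        · refine Polynomial.natDegree_mul_le.trans ?_
          have := Polynomial.natDegree_derivative_lt (p := P) h0.ne'
          rw [Polynomial.natDegree_X]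
          omega
      · exact (Polynomial.natDegree_C_mul_le _ _).trans hP
    · rw [Finset.mem_image]
      refine ⟨Complex.exp (t * Complex.I), ?_, ?_⟩
      · rw [Multiset.mem_toFinset, Polynomial.mem_roots hW0]
        have := key t
        rw [h0] at this
        simpa using this
      · rw [Complex.arg_exp_mul_I, toIocMod_eq_self]
        constructor <;> linarith [ht.1, ht.2, Real.pi_pos]

lemma rotW_deriv {n : ℕ} (w : Fin n → ℝ) (q : (Fin n → ℝ) × (Fin n → ℝ))
    (p : MvPolynomial (Fin n) ℝ) (t : ℝ) :
    HasDerivAt (fun s => MvPolynomial.eval (rotW w s q).1 p)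
      (∑ j, MvPolynomial.eval (rotW w t q).1 (MvPolynomial.pderiv j p) *
        (w j * (rotW w t q).2 j)) t := by
  apply hasDerivAt_eval p (fun s => (rotW w s q).1)
  intro i
  simp only [rotW]
  have h0 : HasDerivAt (fun s : ℝ => s * w i) (w i) t := by
    simpa using (hasDerivAt_id t).mul_const (w i)
  refine ((h0.cos.mul_const (q.1 i)).add (h0.sin.mul_const (q.2 i))).congr_deriv ?_
  ring

lemma rotW_cont1 {n : ℕ} (w : Fin n → ℝ) (q : (Fin n → ℝ) × (Fin n → ℝ))
    (p : MvPolynomial (Fin n) ℝ) :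
    Continuous (fun s => MvPolynomial.eval (rotW w s q).1 p) := by
  refine (MvPolynomial.continuous_eval p).comp ?_
  unfold rotW
  fun_prop

lemma rotW_cont2 {n : ℕ} (w : Fin n → ℝ) (q : (Fin n → ℝ) × (Fin n → ℝ)) (i : Fin n) :
    Continuous (fun s => (rotW w s q).2 i) := by
  unfold rotW
  fun_prop

lemma eval_meas {n : ℕ} (p : MvPolynomial (Fin n) ℝ) :
    Measurable (fun x : Fin n → ℝ => MvPolynomial.eval x p) :=
  (MvPolynomial.continuous_eval p).measurable

lemma term_meas {n : ℕ} {h' : ℝ → ℝ} (hc : Continuous h') (p : MvPolynomial (Fin n) ℝ)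
    (i : Fin n) : Measurable (fun q : (Fin n → ℝ) × (Fin n → ℝ) => h' (MvPolynomial.eval q.1 p) *
        MvPolynomial.eval q.1 (MvPolynomial.pderiv i p) * q.2 i) := by
  have hm := eval_meas p
  have hm' := eval_meas (MvPolynomial.pderiv i p)
  have hcm := hc.measurable
  fun_prop

lemma coord_meas {n : ℕ} {h' : ℝ → ℝ} (hc : Continuous h') (p : MvPolynomial (Fin n) ℝ)
    (i : Fin n) : Measurable (fun q : (Fin n → ℝ) × (Fin n → ℝ) => ‖h' (MvPolynomial.eval q.1 p) *
        MvPolynomial.eval q.1 (MvPolynomial.pderiv i p) * q.2 i‖ₑ) :=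
  (term_meas hc p i).enorm

lemma diag_meas {n : ℕ} {h' : ℝ → ℝ} (hc : Continuous h') (p : MvPolynomial (Fin n) ℝ) :
    Measurable (fun q : (Fin n → ℝ) × (Fin n → ℝ) => ‖∑ i, h' (MvPolynomial.eval q.1 p) *
        MvPolynomial.eval q.1 (MvPolynomial.pderiv i p) * q.2 i‖ₑ) :=
  (Finset.measurable_sum _ fun i _ => term_meas hc p i).enorm

section
variable {n : ℕ} (h h' : ℝ → ℝ) (B : ℝ) (p : MvPolynomial (Fin n) ℝ)

lemma poinc (hh : ∀ s, HasDerivAt h (h' s) s) (hc : Continuous h') (i : Fin n) :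
    ∫⁻ q, ‖h (MvPolynomial.eval (Function.update q.1 i (q.2 i)) p) - h (MvPolynomial.eval q.1 p)‖ₑ
        ∂((gM n).prod (gM n)) ≤
      ENNReal.ofReal (Real.pi / 2) * ∫⁻ q, ‖h' (MvPolynomial.eval q.1 p) *
        MvPolynomial.eval q.1 (MvPolynomial.pderiv i p) * q.2 i‖ₑ ∂((gM n).prod (gM n)) := by
  have hm := eval_meas p
  have hm' := eval_meas (MvPolynomial.pderiv i p)
  have hcm := hc.measurable
  rw [← rot_avg (Pi.single i 1) (fun q => ‖h' (MvPolynomial.eval q.1 p) *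
        MvPolynomial.eval q.1 (MvPolynomial.pderiv i p) * q.2 i‖ₑ) (by fun_prop)]
  refine lintegral_mono fun q => ?_
  set w : Fin n → ℝ := Pi.single i 1 with hw
  have hd : ∀ t, HasDerivAt (fun s => h (MvPolynomial.eval (rotW w s q).1 p))
      (h' (MvPolynomial.eval (rotW w t q).1 p) *
        MvPolynomial.eval (rotW w t q).1 (MvPolynomial.pderiv i p) * (rotW w t q).2 i) t := by
    intro t
    refine ((hh _).comp t (rotW_deriv w q p t)).congr_deriv ?_
    rw [Finset.sum_eq_single i]
    · simp [hw]; ring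
    · intro b _ hb
      simp [hw, hb]
    · simp
  have h1 : (rotW w 0 q).1 = q.1 := by
    ext j; simp [rotW]
  have h2 : (rotW w (Real.pi / 2) q).1 = Function.update q.1 i (q.2 i) := by
    ext j
    by_cases hj : j = i
    · subst hj; simp [rotW, hw]
    · simp [rotW, hw, hj]
  have hcont : Continuous (fun t => h' (MvPolynomial.eval (rotW w t q).1 p) *
        MvPolynomial.eval (rotW w t q).1 (MvPolynomial.pderiv i p) * (rotW w t q).2 i) :=
    ((hc.comp (rotW_cont1 w q p)).mul (rotW_cont1 w q _)).mul (rotW_cont2 w q i)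
  have h3 := intervalIntegral.integral_eq_sub_of_hasDerivAt (a := 0) (b := Real.pi / 2)
    (fun s _ => hd s) (hcont.intervalIntegrable _ _)
  rw [h1, h2] at h3
  rw [← h3, intervalIntegral.integral_of_le (by positivity)]
  refine (enorm_integral_le_lintegral_enorm _).trans ?_
  exact lintegral_mono_set Set.Ioc_subset_Icc_self

lemma noise (hh : ∀ s, HasDerivAt h (h' s) s) (hc : Continuous h') (h0 : ∀ s, 0 ≤ h' s)
    (hB : ∀ s, |h s| ≤ B) (d : ℕ) (hp : p.totalDegree ≤ d) :
    ENNReal.ofReal (Real.pi / 2) * ∫⁻ q, ‖∑ i, h' (MvPolynomial.eval q.1 p) *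
        MvPolynomial.eval q.1 (MvPolynomial.pderiv i p) * q.2 i‖ₑ ∂((gM n).prod (gM n)) ≤
      ENNReal.ofReal (2 ^ (2 * d) * (2 * B)) := by
  have hB0 : 0 ≤ B := (abs_nonneg _).trans (hB 0)
  have hm := eval_meas p
  have hm' := fun i => eval_meas (MvPolynomial.pderiv i p)
  have hcm := hc.measurable
  rw [← rot_avg 1 (fun q => ‖∑ i, h' (MvPolynomial.eval q.1 p) *
        MvPolynomial.eval q.1 (MvPolynomial.pderiv i p) * q.2 i‖ₑ) (diag_meas hc p)]
  have hpt : ∀ q : (Fin n → ℝ) × (Fin n → ℝ), ∫⁻ t in Set.Icc 0 (Real.pi / 2),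
      ‖∑ i, h' (MvPolynomial.eval (rotW 1 t q).1 p) *
        MvPolynomial.eval (rotW 1 t q).1 (MvPolynomial.pderiv i p) * (rotW 1 t q).2 i‖ₑ ≤
      ENNReal.ofReal (2 ^ (2 * d) * (2 * B)) := by
    intro q
    set u : ℝ → ℝ := fun t => MvPolynomial.eval (rotW 1 t q).1 p with hu
    set u' : ℝ → ℝ := fun t => ∑ j, MvPolynomial.eval (rotW 1 t q).1 (MvPolynomial.pderiv j p) *
        ((1 : Fin n → ℝ) j * (rotW 1 t q).2 j) with hu'
    have e : ∀ t, ∑ i, h' (MvPolynomial.eval (rotW 1 t q).1 p) *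
        MvPolynomial.eval (rotW 1 t q).1 (MvPolynomial.pderiv i p) * (rotW 1 t q).2 i =
        h' (u t) * u' t := by
      intro t
      simp only [hu', Finset.mul_sum]
      refine Finset.sum_congr rfl fun i _ => ?_
      simp [hu]; ring
    simp_rw [e]
    have hud : ∀ t, HasDerivAt u (u' t) t := fun t => rotW_deriv 1 q p t
    have huc : Continuous u' := continuous_finsetSum _ fun j _ =>
      (rotW_cont1 1 q _).mul (continuous_const.mul (rotW_cont2 1 q j))
    have hT : TrigDeg d u := by
      have := TrigDeg.eval p hp q.1 q.2
      simpa [hu, rotW] using this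
    rcases hT.zeros hud with hz | ⟨S, hS, hz⟩
    · simp [hz]
    · refine (tv_bound h h' u u' B hh hc h0 hB hud huc S 0 _ (by positivity) hz).trans ?_
      apply ENNReal.ofReal_le_ofReal
      gcongr
      norm_num
  calc _ ≤ ∫⁻ q, ENNReal.ofReal (2 ^ (2 * d) * (2 * B)) ∂((gM n).prod (gM n)) :=
        lintegral_mono hpt
    _ = _ := by simp

lemma smooth_bound (hh : ∀ s, HasDerivAt h (h' s) s) (hc : Continuous h') (h0 : ∀ s, 0 ≤ h' s)
    (hB : ∀ s, |h s| ≤ B) (d : ℕ) (hp : p.totalDegree ≤ d) :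
    ∑ i, ∫⁻ q, ‖h (MvPolynomial.eval (Function.update q.1 i (q.2 i)) p) -
        h (MvPolynomial.eval q.1 p)‖ₑ ∂((gM n).prod (gM n)) ≤
      ENNReal.ofReal √n * ENNReal.ofReal (2 ^ (2 * d) * (2 * B)) := by
  have hm := eval_meas p
  have hm' := fun i => eval_meas (MvPolynomial.pderiv i p)
  have hcm := hc.measurable
  refine (Finset.sum_le_sum fun i _ => poinc h h' p hh hc i).trans ?_
  refine le_trans ?_ (mul_le_mul_right (noise h h' B p hh hc h0 hB d hp) _)
  rw [← Finset.mul_sum, mul_left_comm]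
  refine mul_le_mul_right ?_ _
  rw [lintegral_prod _ (diag_meas hc p).aemeasurable,
    ← lintegral_const_mul _ (diag_meas hc p).lintegral_prod_right']
  have : ∀ i, ∫⁻ q, ‖h' (MvPolynomial.eval q.1 p) *
        MvPolynomial.eval q.1 (MvPolynomial.pderiv i p) * q.2 i‖ₑ ∂((gM n).prod (gM n)) =
      ∫⁻ x, ∫⁻ z, ‖h' (MvPolynomial.eval x p) *
        MvPolynomial.eval x (MvPolynomial.pderiv i p) * z i‖ₑ ∂(gM n) ∂(gM n) := fun i => by
    rw [lintegral_prod _ (coord_meas hc p i).aemeasurable]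
  simp_rw [this]
  rw [← lintegral_finsetSum _ (fun i _ => (coord_meas hc p i).lintegral_prod_right')]
  exact lintegral_mono fun x => sum_coord_le _

end

lemma arctan_lim (s : ℝ) : Filter.Tendsto (fun k : ℕ => Real.arctan ((k : ℝ) ^ 2 * s + k))
    Filter.atTop (nhds (Real.pi / 2 * psign s)) := by
  have hk : Filter.Tendsto (fun k : ℕ => (k : ℝ)) Filter.atTop Filter.atTop :=
    tendsto_natCast_atTop_atTop
  unfold psign
  split_ifs with hs
  · rw [mul_one]
    have : Filter.Tendsto (fun k : ℕ => (k : ℝ) ^ 2 * s + k) Filter.atTop Filter.atTop :=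
      Filter.tendsto_atTop_mono (fun k => le_add_of_nonneg_left (by positivity)) hk
    exact (Real.tendsto_arctan_atTop.mono_right nhdsWithin_le_nhds).comp this
  · push Not at hs
    have h1 : Filter.Tendsto (fun k : ℕ => (k : ℝ) * s + 1) Filter.atTop Filter.atBot :=
      Filter.tendsto_atBot_add_const_right _ _ (hk.atTop_mul_const_of_neg hs)
    have h2 := hk.atTop_mul_atBot₀ h1
    have h3 : Filter.Tendsto (fun k : ℕ => (k : ℝ) ^ 2 * s + k) Filter.atTop Filter.atBot :=
      h2.congr fun k => by ring
    have := (Real.tendsto_arctan_atBot.mono_right nhdsWithin_le_nhds).comp h3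
    rw [mul_neg, mul_one]
    exact this

lemma psign_meas : Measurable psign := by
  unfold psign
  exact Measurable.ite measurableSet_Ici measurable_const measurable_const

lemma limit_bound {n : ℕ} (p : MvPolynomial (Fin n) ℝ) (d : ℕ) (hp : p.totalDegree ≤ d) :
    ∑ i, ∫⁻ q, ‖Real.pi / 2 * psign (MvPolynomial.eval (Function.update q.1 i (q.2 i)) p) -
        Real.pi / 2 * psign (MvPolynomial.eval q.1 p)‖ₑ ∂((gM n).prod (gM n)) ≤
      ENNReal.ofReal √n * ENNReal.ofReal (2 ^ (2 * d) * Real.pi) := by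
  have hm := eval_meas p
  have hps := psign_meas
  have hup : ∀ i : Fin n, Measurable fun q : (Fin n → ℝ) × (Fin n → ℝ) =>
      MvPolynomial.eval (Function.update q.1 i (q.2 i)) p := fun i => by
    refine hm.comp ?_
    refine measurable_pi_lambda _ fun j => ?_
    by_cases hj : j = i
    · subst hj; simp; fun_prop
    · simp [hj]; fun_prop
  set F : ℕ → (Fin n → ℝ) × (Fin n → ℝ) → ℝ≥0∞ := fun k q =>
    ∑ i, ‖Real.arctan ((k : ℝ) ^ 2 * MvPolynomial.eval (Function.update q.1 i (q.2 i)) p + k) -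
      Real.arctan ((k : ℝ) ^ 2 * MvPolynomial.eval q.1 p + k)‖ₑ with hF
  have hat : Measurable Real.arctan := Real.measurable_arctan
  have hFm : ∀ k, Measurable (F k) := fun k => by
    refine Finset.measurable_sum _ fun i _ => ?_
    have := hup i
    fun_prop
  have hFb : ∀ k, ∫⁻ q, F k q ∂((gM n).prod (gM n)) ≤
      ENNReal.ofReal √n * ENNReal.ofReal (2 ^ (2 * d) * Real.pi) := fun k => by
    simp only [hF]
    rw [lintegral_finsetSum _ (fun i _ => by have := hup i; fun_prop)]
    have := smooth_bound (fun s => Real.arctan ((k : ℝ) ^ 2 * s + k))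
      (fun s => 1 / (1 + ((k : ℝ) ^ 2 * s + k) ^ 2) * (k : ℝ) ^ 2) (Real.pi / 2) p
      (fun s => by
        have h0 : HasDerivAt (fun s : ℝ => (k : ℝ) ^ 2 * s + k) ((k : ℝ) ^ 2) s := by
          simpa using ((hasDerivAt_id s).const_mul ((k : ℝ) ^ 2)).add_const (k : ℝ)
        exact h0.arctan)
      (by
        refine (continuous_const.div (by fun_prop) fun s => ?_).mul continuous_const
        positivity)
      (fun s => by positivity)
      (fun s => abs_le.2 ⟨(Real.neg_pi_div_two_lt_arctan _).le, (Real.arctan_lt_pi_div_two _).le⟩)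
      d hp
    rwa [mul_div_cancel₀ _ (two_ne_zero' ℝ)] at this
  rw [← lintegral_finsetSum _ (fun i _ => by have := hup i; fun_prop)]
  have hlim : ∀ q : (Fin n → ℝ) × (Fin n → ℝ),
      ∑ i, ‖Real.pi / 2 * psign (MvPolynomial.eval (Function.update q.1 i (q.2 i)) p) -
        Real.pi / 2 * psign (MvPolynomial.eval q.1 p)‖ₑ =
      Filter.liminf (fun k => F k q) Filter.atTop := fun q => by
    refine (Filter.Tendsto.liminf_eq ?_).symm
    refine tendsto_finsetSum _ fun i _ => ?_
    exact ((arctan_lim _).sub (arctan_lim _)).enorm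
  simp_rw [hlim]
  refine (lintegral_liminf_le hFm).trans ?_
  exact Filter.liminf_le_of_le (by isBoundedDefault) fun b hb => by
    obtain ⟨k, hk⟩ := hb.exists
    exact hk.trans (hFb k)

lemma gas_bound {n : ℕ} (p : MvPolynomial (Fin n) ℝ) (d : ℕ) (hp : p.totalDegree ≤ d) :
    gaussAvgSensitivity n (fun x => psign (MvPolynomial.eval x p)) ≤ 4 ^ d * √n := by
  have hm := eval_meas p
  have hps := psign_meas
  have hup : ∀ i : Fin n, Measurable fun q : (Fin n → ℝ) × ℝ =>
      MvPolynomial.eval (Function.update q.1 i q.2) p := fun i => by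
    refine hm.comp ?_
    refine measurable_pi_lambda _ fun j => ?_
    by_cases hj : j = i
    · subst hj; simp; fun_prop
    · simp [hj]; fun_prop
  have h1 : ∀ i : Fin n, ENNReal.ofReal Real.pi *
      ((gM n).prod (gaussianReal 0 1))
        {xy | psign (MvPolynomial.eval xy.1 p) ≠
          psign (MvPolynomial.eval (Function.update xy.1 i xy.2) p)} ≤
      ∫⁻ q, ‖Real.pi / 2 * psign (MvPolynomial.eval (Function.update q.1 i (q.2 i)) p) -
        Real.pi / 2 * psign (MvPolynomial.eval q.1 p)‖ₑ ∂((gM n).prod (gM n)) := by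
    intro i
    have hmp : MeasurePreserving (Prod.map id (Function.eval i) :
        (Fin n → ℝ) × (Fin n → ℝ) → (Fin n → ℝ) × ℝ)
        ((gM n).prod (gM n)) ((gM n).prod (gaussianReal 0 1)) :=
      (MeasurePreserving.id (gM n)).prod
        (measurePreserving_eval (fun _ : Fin n => gaussianReal 0 1) i)
    have hu := hup i
    have h2 := hmp.lintegral_comp (f := fun xy : (Fin n → ℝ) × ℝ =>
      ‖Real.pi / 2 * psign (MvPolynomial.eval (Function.update xy.1 i xy.2) p) -
        Real.pi / 2 * psign (MvPolynomial.eval xy.1 p)‖ₑ) (by fun_prop)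
    simp only [Prod.map_fst, Prod.map_snd, id, Function.eval] at h2
    rw [h2]
    refine le_trans ?_ (mul_meas_ge_le_lintegral (by fun_prop) (ENNReal.ofReal Real.pi))
    refine mul_le_mul_right (measure_mono ?_) _
    intro xy hne
    simp only [Set.mem_setOf_eq] at hne ⊢
    rw [Real.enorm_eq_ofReal_abs]
    apply ENNReal.ofReal_le_ofReal
    revert hne
    unfold psign
    have := Real.pi_pos
    split_ifs <;> intro hne
    · exact absurd rfl hne
    · refine le_trans (by linarith) (neg_le_abs _)
    · refine le_trans (by linarith) (le_abs_self _)
    · exact absurd rfl hne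
  have h2 := (Finset.sum_le_sum fun i (_ : i ∈ Finset.univ) => h1 i).trans (limit_bound p d hp)
  unfold gaussAvgSensitivity
  change ∑ i : Fin n, (((gM n).prod (gaussianReal 0 1))
        {xy | psign (MvPolynomial.eval xy.1 p) ≠
          psign (MvPolynomial.eval (Function.update xy.1 i xy.2) p)}).toReal ≤ _
  rw [← Finset.mul_sum, ← ENNReal.ofReal_mul (by positivity)] at h2
  have h3 := ENNReal.toReal_mono ENNReal.ofReal_ne_top h2
  rw [ENNReal.toReal_mul, ENNReal.toReal_ofReal Real.pi_pos.le,
    ENNReal.toReal_ofReal (by positivity), ENNReal.toReal_sum (fun i _ => measure_ne_top _ _)] at h3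
  refine le_of_mul_le_mul_left (h3.trans_eq ?_) Real.pi_pos
  rw [pow_mul]
  norm_num
  ring

/-- **Gaussian average sensitivity bound.**  For every positive integer `d` and `c > 0` there
is a constant `C` depending only on `c` and `d` such that every degree-`d` polynomial
threshold function in `n` variables satisfies `gas(f) ≤ C n^{5/6 + c}`. -/
theorem gaussian_average_sensitivity_bound (d : ℕ) (hd : 0 < d) (c : ℝ) (hc : 0 < c) :
    ∃ C : ℝ, 0 < C ∧
      ∀ (n : ℕ) (p : MvPolynomial (Fin n) ℝ), p.totalDegree ≤ d →
        gaussAvgSensitivity n (fun x => psign (MvPolynomial.eval x p)) ≤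
          C * (n : ℝ) ^ ((5 : ℝ) / 6 + c) := by
  refine ⟨4 ^ d, by positivity, fun n p hp => (gas_bound p d hp).trans ?_⟩
  gcongr
  rcases Nat.eq_zero_or_pos n with h0 | h0
  · subst h0
    simp only [Nat.cast_zero, Real.sqrt_zero]
    positivity
  · rw [Real.sqrt_eq_rpow]
    refine Real.rpow_le_rpow_of_exponent_le (by exact_mod_cast h0) ?_
    linarith
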